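/- arXiv:1901.06482 — 2 statements merged into one kernel-verified Lean document; each statement's English description precedes it below -/
import Mathlib

section
/- Let (u^t, v^t)_{t≥0} be a Greenkhorn-type sequence. Then for every t ≥ 0, f(u^t, v^t) − inf_{(u,v) ∈ ℝ^n × ℝ^n} f(u,v) ≤ 4R · E(u^t, v^t), where R = η^{-1}‖C‖_∞ + log n − 2 log(min_{1≤i,j≤n}{r_i, c_j}). -/
open Finset

/-- ℓ∞-norm of a matrix: the maximum entry (entries are nonnegative). -/
noncomputable def matSup {n : ℕ} (C : Fin n → Fin n → ℝ) : ℝ := ⨆ i, ⨆ j, C i j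

/-- min_{1 ≤ i, j ≤ n} { r_i, c_j }. -/
noncomputable def minrc {n : ℕ} (r c : Fin n → ℝ) : ℝ := min (⨅ i, r i) (⨅ j, c j)

/-- The matrix B(u,v) with entries exp(u_i + v_j - C_ij/η). -/
noncomputable def Bmat {n : ℕ} (η : ℝ) (C : Fin n → Fin n → ℝ) (u v : Fin n → ℝ)
    (i j : Fin n) : ℝ := Real.exp (u i + v j - C i j / η)

/-- Row sums of B(u,v). -/
noncomputable def rowSum {n : ℕ} (η : ℝ) (C : Fin n → Fin n → ℝ) (u v : Fin n → ℝ)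
    (i : Fin n) : ℝ := ∑ j, Bmat η C u v i j

/-- Column sums of B(u,v). -/
noncomputable def colSum {n : ℕ} (η : ℝ) (C : Fin n → Fin n → ℝ) (u v : Fin n → ℝ)
    (j : Fin n) : ℝ := ∑ i, Bmat η C u v i j

/-- Dual objective f(u,v) = Σ_{ij} B(u,v)_{ij} - ⟨u,r⟩ - ⟨v,c⟩. -/
noncomputable def dualObj {n : ℕ} (η : ℝ) (C : Fin n → Fin n → ℝ) (r c : Fin n → ℝ)
    (u v : Fin n → ℝ) : ℝ :=
  (∑ i, ∑ j, Bmat η C u v i j) - (∑ i, u i * r i) - (∑ j, v j * c j)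

/-- Residual E(u,v). -/
noncomputable def resid {n : ℕ} (η : ℝ) (C : Fin n → Fin n → ℝ) (r c : Fin n → ℝ)
    (u v : Fin n → ℝ) : ℝ :=
  (∑ i, |rowSum η C u v i - r i|) + (∑ j, |colSum η C u v j - c j|)

/-- A single Greenkhorn-type update. -/
def GreenkhornStep {n : ℕ} (η : ℝ) (C : Fin n → Fin n → ℝ) (r c : Fin n → ℝ)
    (u v u' v' : Fin n → ℝ) : Prop :=
  (∃ I, u' I = u I + Real.log (r I) - Real.log (rowSum η C u v I) ∧
    (∀ i, i ≠ I → u' i = u i) ∧ v' = v) ∨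
  (∃ J, v' J = v J + Real.log (c J) - Real.log (colSum η C u v J) ∧
    (∀ j, j ≠ J → v' j = v j) ∧ u' = u)

/-!
A minimizer `(a, b)` of the dual objective exists in the `ℓ∞`-ball of radius `R`: minimizing exactly
in `v` makes `v` oscillate by at most `‖C‖_∞ / η - log m`, where `m` is the least of the `r_i` and
`c_j`; invariance of the objective under `(u + s, v - s)` then allows `v` to have minimum zero, and
minimizing exactly in `u` bounds `u`, so the objective can always be decreased into the ball. At the
minimizer, `a` and `b` are the exact updates of one another. As an exact update is nonexpansive for
the `ℓ∞`-distance, no update increases the distance to `(a, b)` beyond its initial bound `R`.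
Convexity of the objective and Hölder's inequality conclude.
-/

section Elementary

open Real

variable {ι : Type*} [Fintype ι]

lemma nonempty_of_sum_eq_one {r : ι → ℝ} (hr : ∑ i, r i = 1) : Nonempty ι :=
  univ_nonempty_iff.mp (nonempty_of_sum_ne_zero (hr.trans_ne one_ne_zero))

lemma le_one_of_sum_eq_one {r : ι → ℝ} (hr₀ : ∀ i, 0 ≤ r i) (hr : ∑ i, r i = 1) (i : ι) :
    r i ≤ 1 :=
  hr ▸ single_le_sum (fun j _ => hr₀ j) (mem_univ i)

lemma sum_mul_le_norm_mul_sum_abs (x y : ι → ℝ) : ∑ i, x i * y i ≤ ‖x‖ * ∑ i, |y i| := by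
  rw [mul_sum]
  refine sum_le_sum fun i _ => ?_
  calc x i * y i ≤ |x i| * |y i| := (le_abs_self _).trans_eq (abs_mul _ _)
    _ ≤ ‖x‖ * |y i| := by gcongr; exact norm_le_pi_norm x i

lemma exp_sub_exp_le_sub_mul_exp (x y : ℝ) : exp x - exp y ≤ (x - y) * exp x := by
  have hy : exp y = exp x * exp (y - x) := by rw [← exp_add, add_sub_cancel]
  nlinarith [add_one_le_exp (y - x), exp_pos x]

lemma exists_norm_le_forall_le {E : Type*} [SeminormedAddCommGroup E] [ProperSpace E] {f : E → ℝ}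
    {ρ : ℝ} (hf : Continuous f) (h : ∀ x, ∃ y, ‖y‖ ≤ ρ ∧ f y ≤ f x) :
    ∃ x, ‖x‖ ≤ ρ ∧ ∀ y, f x ≤ f y := by
  obtain ⟨z, hz, -⟩ := h 0
  obtain ⟨x, hx, hmin⟩ := (isCompact_closedBall (0 : E) ρ).exists_isMinOn
    ⟨z, mem_closedBall_zero_iff.mpr hz⟩ hf.continuousOn
  refine ⟨x, mem_closedBall_zero_iff.mp hx, fun y => ?_⟩
  obtain ⟨y', hy', hle⟩ := h y
  exact (hmin (mem_closedBall_zero_iff.mpr hy')).trans hle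

variable [Nonempty ι]

lemma sum_exp_pos (x : ι → ℝ) : 0 < ∑ j, exp (x j) :=
  sum_pos (fun _ _ => exp_pos _) univ_nonempty

lemma log_sum_exp_le_add {x y : ι → ℝ} {d : ℝ} (h : ∀ j, x j ≤ y j + d) :
    log (∑ j, exp (x j)) ≤ log (∑ j, exp (y j)) + d :=
  calc log (∑ j, exp (x j))
    _ ≤ log (∑ j, exp (y j + d)) :=
      log_le_log (sum_exp_pos x) (sum_le_sum fun j _ => exp_le_exp.mpr (h j))
    _ = log ((∑ j, exp (y j)) * exp d) := by simp only [exp_add, sum_mul]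
    _ = log (∑ j, exp (y j)) + d := by
      rw [log_mul (sum_exp_pos y).ne' (exp_pos d).ne', log_exp]

lemma log_sum_exp_le_log_card_add {x : ι → ℝ} {M : ℝ} (h : ∀ j, x j ≤ M) :
    log (∑ j, exp (x j)) ≤ log (Fintype.card ι) + M := by
  simpa using log_sum_exp_le_add (x := x) (y := 0) (d := M) (by simpa using h)

lemma log_card_add_le_log_sum_exp {x : ι → ℝ} {M : ℝ} (h : ∀ j, M ≤ x j) :
    log (Fintype.card ι) + M ≤ log (∑ j, exp (x j)) := by
  simpa [← sub_eq_add_neg, le_sub_iff_add_le] using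
    log_sum_exp_le_add (x := 0) (y := x) (d := -M) (by simpa [← sub_eq_add_neg] using h)

end Elementary

section SoftTransform

open Real

variable {ι κ : Type*} [Fintype κ] {η L m A : ℝ} {C : ι → κ → ℝ} {r : ι → ℝ} {v w : κ → ℝ}

/-- The soft `C`-transform of `v` with marginal `r`: the exact minimizer of the dual objective in
`u` for fixed `v`, and hence the value assigned by a Greenkhorn update. The update of `v` for fixed
`u` is `softTransform η (flip C) c u`. -/
noncomputable def softTransform (η : ℝ) (C : ι → κ → ℝ) (r : ι → ℝ) (v : κ → ℝ) (i : ι) : ℝ :=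
  log (r i) - log (∑ j, exp (v j - C i j / η))

variable [Nonempty κ]

lemma softTransform_sub_le {i k : ι} {d : ℝ} (h : ∀ j, w j - C k j / η ≤ v j - C i j / η + d) :
    softTransform η C r v i - softTransform η C r w k ≤ log (r i) - log (r k) + d := by
  have := log_sum_exp_le_add h
  unfold softTransform
  linarith

lemma lipschitzWith_softTransform [Fintype ι] (η : ℝ) (C : ι → κ → ℝ) (r : ι → ℝ) :
    LipschitzWith 1 (softTransform η C r) := by
  refine LipschitzWith.mk_one fun v w => (dist_pi_le_iff dist_nonneg).mpr fun i => ?_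
  have hvw (j : κ) : |v j - w j| ≤ dist v w := dist_le_pi_dist v w j
  rw [Real.dist_eq, abs_sub_le_iff]
  constructor
  · simpa using softTransform_sub_le (C := C) (η := η) (r := r) (i := i) (k := i)
      fun j => by linarith [(abs_sub_le_iff.mp (hvw j)).2]
  · simpa using softTransform_sub_le (C := C) (η := η) (r := r) (i := i) (k := i)
      fun j => by linarith [(abs_sub_le_iff.mp (hvw j)).1]

lemma softTransform_sub_softTransform_le (hC₀ : ∀ i j, 0 ≤ C i j / η) (hCL : ∀ i j, C i j / η ≤ L)
    (hm : 0 < m) (hmr : ∀ i, m ≤ r i) (hr : ∀ i, r i ≤ 1) (i k : ι) :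
    softTransform η C r v i - softTransform η C r v k ≤ L - log m := by
  have hd : softTransform η C r v i - softTransform η C r v k ≤ log (r i) - log (r k) + L :=
    softTransform_sub_le fun j => by linarith [hC₀ k j, hCL i j]
  have hi : log (r i) ≤ 0 := log_nonpos (hm.le.trans (hmr i)) (hr i)
  have hk : log m ≤ log (r k) := log_le_log hm (hmr k)
  linarith

lemma softTransform_le {i : ι} (hCL : ∀ j, C i j / η ≤ L) (hr₀ : 0 ≤ r i) (hr : r i ≤ 1)
    (hv : ∀ j, 0 ≤ v j) : softTransform η C r v i ≤ L - log (Fintype.card κ) := by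
  have hsum : log (Fintype.card κ) + -L ≤ log (∑ j, exp (v j - C i j / η)) :=
    log_card_add_le_log_sum_exp fun j => by linarith [hCL j, hv j]
  have hi : log (r i) ≤ 0 := log_nonpos hr₀ hr
  unfold softTransform
  linarith

lemma le_softTransform {i : ι} (hC₀ : ∀ j, 0 ≤ C i j / η) (hm : 0 < m) (hmr : m ≤ r i)
    (hv : ∀ j, v j ≤ A) : log m - log (Fintype.card κ) - A ≤ softTransform η C r v i := by
  have hsum : log (∑ j, exp (v j - C i j / η)) ≤ log (Fintype.card κ) + A :=
    log_sum_exp_le_log_card_add fun j => by linarith [hC₀ j, hv j]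
  have hi : log m ≤ log (r i) := log_le_log hm hmr
  unfold softTransform
  linarith

lemma dist_le_of_forall_eq_or_eq_softTransform [Fintype ι] {u u' a : ι → ℝ} {b : κ → ℝ}
    {ρ : ℝ} (ha : a = softTransform η C r b) (hu : dist u a ≤ ρ) (hv : dist v b ≤ ρ)
    (hu' : ∀ i, u' i = u i ∨ u' i = softTransform η C r v i) : dist u' a ≤ ρ := by
  refine (dist_pi_le_iff (dist_nonneg.trans hu)).mpr fun i => ?_
  rcases hu' i with h | h <;> rw [h]
  · exact (dist_le_pi_dist u a i).trans hu
  · calc dist (softTransform η C r v i) (a i)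
      _ ≤ dist (softTransform η C r v) a := dist_le_pi_dist _ a i
      _ ≤ dist v b := by
        simpa [ha] using (lipschitzWith_softTransform η C r).dist_le_mul v b
      _ ≤ ρ := hv

end SoftTransform

section Dual

open Real

variable {n : ℕ} {η : ℝ} {C : Fin n → Fin n → ℝ} {r c u v : Fin n → ℝ}

lemma colSum_eq_rowSum_flip (η : ℝ) (C : Fin n → Fin n → ℝ) (u v : Fin n → ℝ) (j : Fin n) :
    colSum η C u v j = rowSum η (flip C) v u j := by
  simp only [colSum, rowSum, Bmat, flip, add_comm]

lemma dualObj_flip (η : ℝ) (C : Fin n → Fin n → ℝ) (r c u v : Fin n → ℝ) :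
    dualObj η (flip C) c r v u = dualObj η C r c u v := by
  simp only [dualObj, Bmat, flip, add_comm (v _)]
  rw [sum_comm]
  ring

lemma dualObj_add_sub_const (hrc : ∑ i, r i = ∑ j, c j) (u v : Fin n → ℝ) (s : ℝ) :
    dualObj η C r c (fun i => u i + s) (fun j => v j - s) = dualObj η C r c u v := by
  simp only [dualObj, Bmat, add_add_sub_cancel, add_mul, sub_mul, sum_add_distrib,
    sum_sub_distrib, ← mul_sum, hrc]
  ring

lemma continuous_dualObj (η : ℝ) (C : Fin n → Fin n → ℝ) (r c : Fin n → ℝ) :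
    Continuous fun p : (Fin n → ℝ) × (Fin n → ℝ) => dualObj η C r c p.1 p.2 := by
  unfold dualObj Bmat
  fun_prop

lemma rowSum_eq_mul_exp {i : Fin n} (hr : 0 < r i) (u v : Fin n → ℝ) :
    rowSum η C u v i = r i * exp (u i - softTransform η C r v i) := by
  have : Nonempty (Fin n) := ⟨i⟩
  have hsum : rowSum η C u v i = exp (u i) * ∑ j, exp (v j - C i j / η) := by
    simp only [rowSum, Bmat, add_sub_assoc, exp_add, mul_sum]
  rw [hsum, softTransform, exp_sub, exp_sub, exp_log hr, exp_log (sum_exp_pos _)]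
  field_simp

lemma add_log_sub_log_rowSum {i : Fin n} (hr : 0 < r i) (u v : Fin n → ℝ) :
    u i + log (r i) - log (rowSum η C u v i) = softTransform η C r v i := by
  rw [rowSum_eq_mul_exp hr, log_mul hr.ne' (exp_pos _).ne', log_exp]
  ring

lemma GreenkhornStep.eq_or_eq_softTransform {u' v' : Fin n → ℝ}
    (h : GreenkhornStep η C r c u v u' v') (hr : ∀ i, 0 < r i) (hc : ∀ j, 0 < c j) :
    (∀ i, u' i = u i ∨ u' i = softTransform η C r v i) ∧
      ∀ j, v' j = v j ∨ v' j = softTransform η (flip C) c u j := by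
  rcases h with ⟨I, hI, hne, rfl⟩ | ⟨J, hJ, hne, rfl⟩
  · refine ⟨fun i => ?_, fun j => .inl rfl⟩
    rcases eq_or_ne i I with rfl | hi
    · exact .inr (hI.trans (add_log_sub_log_rowSum (hr i) u v'))
    · exact .inl (hne i hi)
  · refine ⟨fun i => .inl rfl, fun j => ?_⟩
    rcases eq_or_ne j J with rfl | hj
    · rw [colSum_eq_rowSum_flip, add_log_sub_log_rowSum (hc j)] at hJ
      exact .inr hJ
    · exact .inl (hne j hj)

lemma dualObj_sub_dualObj_softTransform (hr : ∀ i, 0 < r i) (u v : Fin n → ℝ) :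
    dualObj η C r c u v - dualObj η C r c (softTransform η C r v) v =
      ∑ i, r i * (exp (u i - softTransform η C r v i) - (u i - softTransform η C r v i + 1)) := by
  have hrow (u : Fin n → ℝ) :
      ∑ i, ∑ j, Bmat η C u v i j = ∑ i, r i * exp (u i - softTransform η C r v i) :=
    sum_congr rfl fun i _ => rowSum_eq_mul_exp (hr i) u v
  simp only [dualObj, hrow, sub_self, exp_zero, mul_sub, mul_add, sum_sub_distrib,
    sum_add_distrib, mul_comm (r _) (u _), mul_comm (r _) (softTransform η C r v _)]
  ring

lemma dualObj_softTransform_le (hr : ∀ i, 0 < r i) (u v : Fin n → ℝ) :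
    dualObj η C r c (softTransform η C r v) v ≤ dualObj η C r c u v := by
  rw [← sub_nonneg, dualObj_sub_dualObj_softTransform hr]
  exact sum_nonneg fun i _ => mul_nonneg (hr i).le (sub_nonneg.mpr (add_one_le_exp _))

lemma eq_softTransform_of_dualObj_le (hr : ∀ i, 0 < r i)
    (h : dualObj η C r c u v ≤ dualObj η C r c (softTransform η C r v) v) :
    u = softTransform η C r v := by
  by_contra hne
  obtain ⟨i, hi⟩ := Function.ne_iff.mp hne
  rw [← sub_nonpos, dualObj_sub_dualObj_softTransform hr] at h
  refine h.not_gt (sum_pos' (fun k _ => ?_) ⟨i, mem_univ i, ?_⟩)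
  · exact mul_nonneg (hr k).le (sub_nonneg.mpr (add_one_le_exp _))
  · exact mul_pos (hr i) (sub_pos.mpr (add_one_lt_exp (sub_ne_zero.mpr hi)))

lemma dualObj_sub_dualObj_le_sum (u v a b : Fin n → ℝ) :
    dualObj η C r c u v - dualObj η C r c a b ≤
      ∑ i, (u i - a i) * (rowSum η C u v i - r i) +
        ∑ j, (v j - b j) * (colSum η C u v j - c j) := by
  have hentry (i j : Fin n) : Bmat η C u v i j - Bmat η C a b i j ≤
      (u i - a i) * Bmat η C u v i j + (v j - b j) * Bmat η C u v i j := by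
    refine (exp_sub_exp_le_sub_mul_exp _ _).trans_eq ?_
    unfold Bmat
    ring
  have hsum : ∑ i, ∑ j, Bmat η C u v i j - ∑ i, ∑ j, Bmat η C a b i j ≤
      ∑ i, (u i - a i) * rowSum η C u v i + ∑ j, (v j - b j) * colSum η C u v j := by
    simp only [rowSum, colSum, mul_sum]
    rw [sum_comm (f := fun j i => (v j - b j) * Bmat η C u v i j)]
    simp only [← sum_add_distrib, ← sum_sub_distrib]
    exact sum_le_sum fun i _ => sum_le_sum fun j _ => hentry i j
  simp only [dualObj, mul_sub, sub_mul, sum_sub_distrib] at hsum ⊢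
  linarith

lemma resid_nonneg (η : ℝ) (C : Fin n → Fin n → ℝ) (r c u v : Fin n → ℝ) :
    0 ≤ resid η C r c u v := by
  unfold resid
  positivity

lemma dualObj_sub_dualObj_le_mul_resid {a b : Fin n → ℝ} {ρ : ℝ} (hu : dist u a ≤ ρ)
    (hv : dist v b ≤ ρ) :
    dualObj η C r c u v - dualObj η C r c a b ≤ ρ * resid η C r c u v := by
  rw [dist_eq_norm] at hu hv
  calc dualObj η C r c u v - dualObj η C r c a b
    _ ≤ ∑ i, (u - a) i * (rowSum η C u v i - r i) + ∑ j, (v - b) j * (colSum η C u v j - c j) :=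
      dualObj_sub_dualObj_le_sum u v a b
    _ ≤ ‖u - a‖ * ∑ i, |rowSum η C u v i - r i| + ‖v - b‖ * ∑ j, |colSum η C u v j - c j| :=
      add_le_add (sum_mul_le_norm_mul_sum_abs _ _) (sum_mul_le_norm_mul_sum_abs _ _)
    _ ≤ ρ * ∑ i, |rowSum η C u v i - r i| + ρ * ∑ j, |colSum η C u v j - c j| := by gcongr
    _ = ρ * resid η C r c u v := (mul_add _ _ _).symm

lemma le_matSup (C : Fin n → Fin n → ℝ) (i j : Fin n) : C i j ≤ matSup C :=
  (Finite.le_ciSup (C i) j).trans (Finite.le_ciSup (fun i => ⨆ j, C i j) i)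

lemma minrc_le_left (r c : Fin n → ℝ) (i : Fin n) : minrc r c ≤ r i :=
  (min_le_left _ _).trans (Finite.ciInf_le r i)

lemma minrc_le_right (r c : Fin n → ℝ) (j : Fin n) : minrc r c ≤ c j :=
  (min_le_right _ _).trans (Finite.ciInf_le c j)

lemma minrc_pos [Nonempty (Fin n)] (hr : ∀ i, 0 < r i) (hc : ∀ j, 0 < c j) : 0 < minrc r c := by
  obtain ⟨i, hi⟩ := exists_eq_ciInf_of_finite (f := r)
  obtain ⟨j, hj⟩ := exists_eq_ciInf_of_finite (f := c)
  exact lt_min (hi ▸ hr i) (hj ▸ hc j)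

/-- The radius `R = ‖C‖_∞ / η + log n - 2 log (min {r_i, c_j})` of an `ℓ∞`-ball containing a
minimizer of the dual objective. -/
noncomputable def dualRadius (η : ℝ) (C : Fin n → Fin n → ℝ) (r c : Fin n → ℝ) : ℝ :=
  matSup C / η + log n - 2 * log (minrc r c)

lemma log_minrc_nonpos (hr : ∀ i, 0 < r i) (hc : ∀ j, 0 < c j) (hr1 : ∑ i, r i = 1) :
    log (minrc r c) ≤ 0 := by
  have : Nonempty (Fin n) := nonempty_of_sum_eq_one hr1
  let i : Fin n := Classical.arbitrary _
  exact log_nonpos (minrc_pos hr hc).le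
    ((minrc_le_left r c i).trans (le_one_of_sum_eq_one (fun k => (hr k).le) hr1 i))

lemma dualRadius_nonneg (hη : 0 < η) (hC : ∀ i j, 0 ≤ C i j) (hr : ∀ i, 0 < r i)
    (hc : ∀ j, 0 < c j) (hr1 : ∑ i, r i = 1) : 0 ≤ dualRadius η C r c := by
  have hL : 0 ≤ matSup C / η :=
    div_nonneg (Real.iSup_nonneg fun i => Real.iSup_nonneg fun j => hC i j) hη.le
  have hm : log (minrc r c) ≤ 0 := log_minrc_nonpos hr hc hr1
  have hn : 0 ≤ log (n : ℝ) := log_natCast_nonneg n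
  unfold dualRadius
  linarith

lemma div_le_matSup_div (hη : 0 < η) (C : Fin n → Fin n → ℝ) (i j : Fin n) :
    C i j / η ≤ matSup C / η :=
  div_le_div_of_nonneg_right (le_matSup C i j) hη.le

lemma norm_softTransform_le_dualRadius (hη : 0 < η) (hC : ∀ i j, 0 ≤ C i j) (hr : ∀ i, 0 < r i)
    (hc : ∀ j, 0 < c j) (hr1 : ∑ i, r i = 1) (hv₀ : ∀ j, 0 ≤ v j)
    (hv : ∀ j, v j ≤ matSup C / η - log (minrc r c)) :
    ‖softTransform η C r v‖ ≤ dualRadius η C r c := by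
  have hR : 0 ≤ dualRadius η C r c := dualRadius_nonneg hη hC hr hc hr1
  refine (pi_norm_le_iff_of_nonneg hR).mpr fun i => ?_
  have : Nonempty (Fin n) := ⟨i⟩
  have hm : 0 < minrc r c := minrc_pos hr hc
  have hmi : minrc r c ≤ r i := minrc_le_left r c i
  have hi : r i ≤ 1 := le_one_of_sum_eq_one (fun k => (hr k).le) hr1 i
  have hlog : log (minrc r c) ≤ 0 := log_minrc_nonpos hr hc hr1
  have hn : 0 ≤ log (n : ℝ) := log_natCast_nonneg n
  have hle : softTransform η C r v i ≤ matSup C / η - log (Fintype.card (Fin n)) :=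
    softTransform_le (div_le_matSup_div hη C i) (hr i).le hi hv₀
  have hge := le_softTransform (fun j => div_nonneg (hC i j) hη.le) hm hmi hv
  rw [Fintype.card_fin] at hle hge
  unfold dualRadius
  exact abs_le.mpr ⟨by linarith, by linarith⟩

lemma exists_norm_le_dualRadius_dualObj_le (hη : 0 < η) (hC : ∀ i j, 0 ≤ C i j)
    (hr : ∀ i, 0 < r i) (hc : ∀ j, 0 < c j) (hr1 : ∑ i, r i = 1) (hc1 : ∑ j, c j = 1)
    (u v : Fin n → ℝ) :
    ∃ p : (Fin n → ℝ) × (Fin n → ℝ),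
      ‖p‖ ≤ dualRadius η C r c ∧ dualObj η C r c p.1 p.2 ≤ dualObj η C r c u v := by
  have : Nonempty (Fin n) := nonempty_of_sum_eq_one hr1
  set w := softTransform η (flip C) c u
  obtain ⟨k, hk⟩ := Finite.exists_min w
  set b : Fin n → ℝ := fun j => w j - w k
  have hb₀ (j : Fin n) : 0 ≤ b j := sub_nonneg.mpr (hk j)
  have hb (j : Fin n) : b j ≤ matSup C / η - log (minrc r c) :=
    softTransform_sub_softTransform_le (fun j i => div_nonneg (hC i j) hη.le)
      (fun j i => div_le_matSup_div hη C i j) (minrc_pos hr hc) (minrc_le_right r c)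
      (le_one_of_sum_eq_one (fun k => (hc k).le) hc1) j k
  have hbR : ‖b‖ ≤ dualRadius η C r c := by
    refine (pi_norm_le_iff_of_nonempty _).mpr fun j => ?_
    have hm : log (minrc r c) ≤ 0 := log_minrc_nonpos hr hc hr1
    have hn : 0 ≤ log (n : ℝ) := log_natCast_nonneg n
    rw [Real.norm_of_nonneg (hb₀ j), dualRadius]
    linarith [hb j]
  refine ⟨(softTransform η C r b, b), norm_prod_le_iff.mpr
    ⟨norm_softTransform_le_dualRadius hη hC hr hc hr1 hb₀ hb, hbR⟩, ?_⟩
  calc dualObj η C r c (softTransform η C r b) b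
    _ ≤ dualObj η C r c (fun i => u i + w k) b := dualObj_softTransform_le hr _ b
    _ = dualObj η C r c u w := dualObj_add_sub_const (hr1.trans hc1.symm) u w (w k)
    _ = dualObj η (flip C) c r w u := (dualObj_flip η C r c u w).symm
    _ ≤ dualObj η (flip C) c r v u := dualObj_softTransform_le hc v u
    _ = dualObj η C r c u v := dualObj_flip η C r c u v

lemma exists_forall_dualObj_le (hη : 0 < η) (hC : ∀ i j, 0 ≤ C i j)
    (hr : ∀ i, 0 < r i) (hc : ∀ j, 0 < c j) (hr1 : ∑ i, r i = 1) (hc1 : ∑ j, c j = 1) :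
    ∃ a b : Fin n → ℝ, ‖a‖ ≤ dualRadius η C r c ∧ ‖b‖ ≤ dualRadius η C r c ∧
      ∀ u v, dualObj η C r c a b ≤ dualObj η C r c u v := by
  obtain ⟨⟨a, b⟩, hab, hmin⟩ := exists_norm_le_forall_le (continuous_dualObj η C r c)
    fun p => exists_norm_le_dualRadius_dualObj_le hη hC hr hc hr1 hc1 p.1 p.2
  exact ⟨a, b, (norm_fst_le _).trans hab, (norm_snd_le _).trans hab, fun u v => hmin (u, v)⟩

lemma eq_softTransform_of_forall_dualObj_le {a b : Fin n → ℝ} (hr : ∀ i, 0 < r i)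
    (hc : ∀ j, 0 < c j) (hmin : ∀ u v, dualObj η C r c a b ≤ dualObj η C r c u v) :
    a = softTransform η C r b ∧ b = softTransform η (flip C) c a := by
  refine ⟨eq_softTransform_of_dualObj_le hr (hmin _ b),
    eq_softTransform_of_dualObj_le (c := r) hc ?_⟩
  simpa only [dualObj_flip] using hmin a _

end Dual

theorem stmt5_general {n : ℕ} {η : ℝ} (hη : 0 < η) {C : Fin n → Fin n → ℝ}
    (hC : ∀ i j, 0 ≤ C i j) {r c : Fin n → ℝ} (hr : ∀ i, 0 < r i) (hc : ∀ j, 0 < c j)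
    (hr1 : ∑ i, r i = 1) (hc1 : ∑ j, c j = 1) {U V : ℕ → Fin n → ℝ} (hU0 : U 0 = 0) (hV0 : V 0 = 0)
    (hU : ∀ t i, U (t + 1) i = U t i ∨ U (t + 1) i = softTransform η C r (V t) i)
    (hV : ∀ t j, V (t + 1) j = V t j ∨ V (t + 1) j = softTransform η (flip C) c (U t) j) (t : ℕ) :
    dualObj η C r c (U t) (V t) -
        (⨅ p : (Fin n → ℝ) × (Fin n → ℝ), dualObj η C r c p.1 p.2) ≤
      dualRadius η C r c * resid η C r c (U t) (V t) := by
  have : Nonempty (Fin n) := nonempty_of_sum_eq_one hr1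
  obtain ⟨a, b, ha, hb, hmin⟩ := exists_forall_dualObj_le hη hC hr hc hr1 hc1
  obtain ⟨hab, hba⟩ := eq_softTransform_of_forall_dualObj_le hr hc hmin
  have hdist : dist (U t) a ≤ dualRadius η C r c ∧ dist (V t) b ≤ dualRadius η C r c := by
    induction t with
    | zero => simpa only [hU0, hV0, dist_zero_left] using And.intro ha hb
    | succ t ih =>
      exact ⟨dist_le_of_forall_eq_or_eq_softTransform hab ih.1 ih.2 (hU t),
        dist_le_of_forall_eq_or_eq_softTransform hba ih.2 ih.1 (hV t)⟩
  have hinf : dualObj η C r c a b ≤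
      ⨅ p : (Fin n → ℝ) × (Fin n → ℝ), dualObj η C r c p.1 p.2 :=
    le_ciInf fun p => hmin p.1 p.2
  exact (sub_le_sub_left hinf _).trans (dualObj_sub_dualObj_le_mul_resid hdist.1 hdist.2)

theorem stmt5 (n : ℕ) (hn : 2 ≤ n) (η : ℝ) (hη : 0 < η)
    (C : Fin n → Fin n → ℝ) (hC : ∀ i j, 0 ≤ C i j)
    (r c : Fin n → ℝ) (hr : ∀ i, 0 < r i) (hc : ∀ j, 0 < c j)
    (hr1 : ∑ i, r i = 1) (hc1 : ∑ j, c j = 1)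
    (U V : ℕ → Fin n → ℝ) (hU0 : U 0 = 0) (hV0 : V 0 = 0)
    (hstep : ∀ t, GreenkhornStep η C r c (U t) (V t) (U (t + 1)) (V (t + 1)))
    (R : ℝ)
    (hR : R = matSup C / η + Real.log (n : ℝ) - 2 * Real.log (minrc r c)) :
    ∀ t : ℕ,
      dualObj η C r c (U t) (V t) -
        (⨅ p : (Fin n → ℝ) × (Fin n → ℝ), dualObj η C r c p.1 p.2) ≤
      4 * R * resid η C r c (U t) (V t) := by
  intro t
  have hstep' (t : ℕ) := (hstep t).eq_or_eq_softTransform hr hc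
  have hgap := stmt5_general hη hC hr hc hr1 hc1 hU0 hV0 (fun t => (hstep' t).1)
    (fun t => (hstep' t).2) t
  have hRE := mul_nonneg (dualRadius_nonneg hη hC hr hc hr1) (resid_nonneg η C r c (U t) (V t))
  rw [dualRadius, ← hR] at hgap hRE
  linarith
end

section
/- Let n ≥ 2 be an integer, ε ∈ (0,1), and η = ε/(4 log n). Define φ̃ : ℝ^n × ℝ^n → ℝ by φ̃(α, β) = η Σ_{i,j=1}^n exp(−(1 − α_i − β_j)/η − 1) − (1/n) Σ_{i=1}^n α_i − (1/n) Σ_{j=1}^n β_j (this is the dual regularized OT objective with cost matrix C = 1_n 1_nᵀ and marginals r = c = (1/n) 1_n). Then every global minimizer (α*, β*) of φ̃ satisfies √(Σ_{i=1}^n (α*_i)² + Σ_{i=1}^n (β*_i)²) ≥ √(n/2) · (1 + ε/(4 log n) − ε/2). -/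
open Finset

/-- The dual regularized OT objective with cost matrix 1ₙ1ₙᵀ and marginals r = c = (1/n)1ₙ. -/
noncomputable def phiTilde (n : ℕ) (η : ℝ) (a b : Fin n → ℝ) : ℝ :=
  η * ∑ i, ∑ j, Real.exp (-(1 - a i - b j) / η - 1) -
    (1 / (n : ℝ)) * ∑ i, a i - (1 / (n : ℝ)) * ∑ j, b j

/-!
Subtracting a constant `t` from the first potential multiplies the Gibbs mass `S` by `exp (-t / η)`
and raises the linear part of the dual objective by `t`. The best such shift is `t = η * log S`; it
normalizes the mass to `1`. Hence a minimizer has mass `1`, so its value is `η` minus its pairing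
with the marginals, and comparison with the normalized zero potentials bounds this pairing below
by `-η * log S₀`, where `S₀ = ∑ exp (-C i j / η - 1)`. Cauchy–Schwarz turns this into a lower bound
on the norm. For `C = 1` and uniform marginals, `S₀ = n ^ 2 * exp (-1 / η - 1)` and the marginals
have squared norm `2 / n`.
-/

section EntropicDual

variable {ι κ : Type*} [Fintype ι] [Fintype κ] {η : ℝ} {C : ι → κ → ℝ} {r : ι → ℝ} {c : κ → ℝ}
  {a : ι → ℝ} {b : κ → ℝ}

/-- The total mass of the (unnormalized) transport plan associated with the potentials `a`, `b`
for the cost `C` and the entropic regularization parameter `η`. -/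
noncomputable def gibbsMass (η : ℝ) (C : ι → κ → ℝ) (a : ι → ℝ) (b : κ → ℝ) : ℝ :=
  ∑ i, ∑ j, Real.exp (-(C i j - a i - b j) / η - 1)

/-- The dual objective, to be minimized, of entropically regularized optimal transport with cost
`C` and marginals `r`, `c`. -/
noncomputable def entropicDual (η : ℝ) (C : ι → κ → ℝ) (r : ι → ℝ) (c : κ → ℝ)
    (a : ι → ℝ) (b : κ → ℝ) : ℝ :=
  η * gibbsMass η C a b - ∑ i, r i * a i - ∑ j, c j * b j

theorem gibbsMass_pos [Nonempty ι] [Nonempty κ] (η : ℝ) (C : ι → κ → ℝ) (a : ι → ℝ) (b : κ → ℝ) :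
    0 < gibbsMass η C a b :=
  sum_pos (fun _ _ ↦ sum_pos (fun _ _ ↦ Real.exp_pos _) univ_nonempty) univ_nonempty

theorem gibbsMass_sub_const (η : ℝ) (C : ι → κ → ℝ) (a : ι → ℝ) (b : κ → ℝ) (t : ℝ) :
    gibbsMass η C (fun i ↦ a i - t) b = gibbsMass η C a b * Real.exp (-(t / η)) := by
  simp only [gibbsMass, sum_mul, ← Real.exp_add]
  refine sum_congr rfl fun i _ ↦ sum_congr rfl fun j _ ↦ ?_
  ring_nf

theorem gibbsMass_sub_mul_log [Nonempty ι] [Nonempty κ] (hη : η ≠ 0) (C : ι → κ → ℝ) (a : ι → ℝ)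
    (b : κ → ℝ) : gibbsMass η C (fun i ↦ a i - η * Real.log (gibbsMass η C a b)) b = 1 := by
  have hpos := gibbsMass_pos η C a b
  rw [gibbsMass_sub_const, mul_div_cancel_left₀ _ hη, Real.exp_neg, Real.exp_log hpos,
    mul_inv_cancel₀ hpos.ne']

theorem gibbsMass_const_zero (η γ : ℝ) :
    gibbsMass η (fun (_ : ι) (_ : κ) ↦ γ) 0 0 =
      Fintype.card ι * Fintype.card κ * Real.exp (-γ / η - 1) := by
  simp [gibbsMass, mul_assoc]

theorem entropicDual_sub_mul_log [Nonempty ι] [Nonempty κ] (hη : η ≠ 0) (hr : ∑ i, r i = 1)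
    (C : ι → κ → ℝ) (c : κ → ℝ) (a : ι → ℝ) (b : κ → ℝ) :
    entropicDual η C r c (fun i ↦ a i - η * Real.log (gibbsMass η C a b)) b =
      η + η * Real.log (gibbsMass η C a b) - ∑ i, r i * a i - ∑ j, c j * b j := by
  simp only [entropicDual, gibbsMass_sub_mul_log hη, mul_sub, sum_sub_distrib,
    ← sum_mul, hr]
  ring

theorem gibbsMass_eq_one_of_forall_entropicDual_le [Nonempty ι] [Nonempty κ] (hη : 0 < η)
    (hr : ∑ i, r i = 1) (hmin : ∀ x, entropicDual η C r c a b ≤ entropicDual η C r c x b) :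
    gibbsMass η C a b = 1 := by
  by_contra hne
  have hlog : Real.log (gibbsMass η C a b) < gibbsMass η C a b - 1 :=
    Real.log_lt_sub_one_of_pos (gibbsMass_pos η C a b) hne
  have hle := hmin fun i ↦ a i - η * Real.log (gibbsMass η C a b)
  rw [entropicDual_sub_mul_log hη.ne' hr, entropicDual] at hle
  linarith [mul_lt_mul_of_pos_left hlog hη]

theorem sub_mul_log_gibbsMass_le_of_forall_entropicDual_le [Nonempty ι] [Nonempty κ] (hη : 0 < η)
    (hr : ∑ i, r i = 1) (hmin : ∀ x y, entropicDual η C r c a b ≤ entropicDual η C r c x y)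
    (x : ι → ℝ) (y : κ → ℝ) :
    ∑ i, r i * x i + ∑ j, c j * y j - η * Real.log (gibbsMass η C x y) ≤
      ∑ i, r i * a i + ∑ j, c j * b j := by
  have hmass : gibbsMass η C a b = 1 :=
    gibbsMass_eq_one_of_forall_entropicDual_le hη hr fun x ↦ hmin x b
  have hle := hmin (fun i ↦ x i - η * Real.log (gibbsMass η C x y)) y
  rw [entropicDual_sub_mul_log hη.ne' hr, entropicDual, hmass] at hle
  linarith

theorem sum_mul_add_sum_mul_le_sqrt_mul_sqrt (r a : ι → ℝ) (c b : κ → ℝ) :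
    ∑ i, r i * a i + ∑ j, c j * b j ≤
      √(∑ i, r i ^ 2 + ∑ j, c j ^ 2) * √(∑ i, a i ^ 2 + ∑ j, b j ^ 2) := by
  simpa only [Fintype.sum_sum_type, Sum.elim_inl, Sum.elim_inr] using
    Real.sum_mul_le_sqrt_mul_sqrt univ (Sum.elim r c) (Sum.elim a b)

theorem neg_mul_log_gibbsMass_zero_le_sqrt_mul_sqrt [Nonempty ι] [Nonempty κ] (hη : 0 < η)
    (hr : ∑ i, r i = 1) (hmin : ∀ x y, entropicDual η C r c a b ≤ entropicDual η C r c x y) :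
    -(η * Real.log (gibbsMass η C 0 0)) ≤
      √(∑ i, r i ^ 2 + ∑ j, c j ^ 2) * √(∑ i, a i ^ 2 + ∑ j, b j ^ 2) := by
  have hpairing : -(η * Real.log (gibbsMass η C 0 0)) ≤ ∑ i, r i * a i + ∑ j, c j * b j := by
    simpa using sub_mul_log_gibbsMass_le_of_forall_entropicDual_le hη hr hmin 0 0
  exact hpairing.trans (sum_mul_add_sum_mul_le_sqrt_mul_sqrt r a c b)

theorem neg_mul_log_gibbsMass_const_zero [Nonempty ι] [Nonempty κ] (hη : η ≠ 0) (γ : ℝ) :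
    -(η * Real.log (gibbsMass η (fun (_ : ι) (_ : κ) ↦ γ) 0 0)) =
      γ + η - η * (Real.log (Fintype.card ι) + Real.log (Fintype.card κ)) := by
  rw [gibbsMass_const_zero, Real.log_mul (by positivity) (Real.exp_ne_zero _), Real.log_exp,
    Real.log_mul (by positivity) (by positivity)]
  field

end EntropicDual

theorem phiTilde_eq_entropicDual (n : ℕ) (η : ℝ) (a b : Fin n → ℝ) :
    phiTilde n η a b =
      entropicDual η (fun _ _ ↦ 1) (fun _ ↦ 1 / (n : ℝ)) (fun _ ↦ 1 / (n : ℝ)) a b := by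
  simp only [phiTilde, entropicDual, gibbsMass, mul_sum]

theorem stmt16_general {n : ℕ} (hn : n ≠ 0) {η : ℝ} (hη : 0 < η) {as bs : Fin n → ℝ}
    (hmin : ∀ a b : Fin n → ℝ, phiTilde n η as bs ≤ phiTilde n η a b) :
    √((n : ℝ) / 2) * (1 + η - 2 * η * Real.log n) ≤ √(∑ i, as i ^ 2 + ∑ i, bs i ^ 2) := by
  have : NeZero n := ⟨hn⟩
  have hmarginal : ∑ _i : Fin n, 1 / (n : ℝ) = 1 := by simp [hn]
  have hnorm :
      ∑ _i : Fin n, (1 / (n : ℝ)) ^ 2 + ∑ _i : Fin n, (1 / (n : ℝ)) ^ 2 = (n / 2 : ℝ)⁻¹ := by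
    simp only [sum_const, card_univ, Fintype.card_fin, nsmul_eq_mul]
    field
  simp only [phiTilde_eq_entropicDual] at hmin
  have hbound := neg_mul_log_gibbsMass_zero_le_sqrt_mul_sqrt hη hmarginal hmin
  rw [neg_mul_log_gibbsMass_const_zero hη.ne', hnorm, Real.sqrt_inv, Fintype.card_fin,
    ← div_eq_inv_mul, le_div_iff₀' (by positivity)] at hbound
  linarith

theorem stmt16 (n : ℕ) (hn : 2 ≤ n) (ε : ℝ) (hε : ε ∈ Set.Ioo (0 : ℝ) 1)
    (η : ℝ) (hη : η = ε / (4 * Real.log (n : ℝ)))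
    (as bs : Fin n → ℝ)
    (hmin : ∀ a b : Fin n → ℝ, phiTilde n η as bs ≤ phiTilde n η a b) :
    Real.sqrt ((n : ℝ) / 2) * (1 + ε / (4 * Real.log (n : ℝ)) - ε / 2) ≤
      Real.sqrt ((∑ i, (as i) ^ 2) + (∑ i, (bs i) ^ 2)) := by
  have hlog : 0 < Real.log n := Real.log_pos (by exact_mod_cast hn)
  subst hη
  refine le_of_eq_of_le ?_ (stmt16_general (by lia) (div_pos hε.1 (by positivity)) hmin)
  field
end
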